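/- arXiv:2212.09459 — 3 statements merged into one kernel-verified Lean document; each statement's English description precedes it below -/
import Mathlib

section
/- Let f : ℝ → ℝ be continuous on [0,∞) with f(x) ≥ 0 for all x ≥ 0, and suppose f is injective on the set {x ≥ 0 : f(x) ≠ 0}. Then at least one of the following three statements holds: (i) f is injective on [0,∞); (ii) there exists y₀ > 0 such that f(x) = 0 for all x ∈ [0, y₀] and f is strictly increasing on (y₀, ∞); (iii) there exists x₀ ≥ 0 such that f(x) = 0 for all x ≥ x₀ and f is strictly decreasing on [0, x₀). -/
/-!
If `f` is not injective on `[0, ∞)`, it has two zeros `a < b`, since nonzero values are not repeated.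
By the intermediate value theorem a positive value cannot lie between two zeros, nor can there be
positive values on both sides of `[a, b]`: either would force some small positive value to be taken
twice. So the zero set is an interval `[0, y₀]` or `[x₀, ∞)`. On the complement strict monotonicity
is again the intermediate value theorem: a monotonicity failure makes `f`, on its way to the
zero set, repeat a positive value.
-/

/-- A positive value cannot lie between two zeros: half of it would be taken twice. -/
lemma eq_zero_between (f : ℝ → ℝ)
    (hfc : ContinuousOn f (Set.Ici 0))
    (hfnn : ∀ x : ℝ, 0 ≤ x → 0 ≤ f x)
    (hinj : Set.InjOn f {x : ℝ | 0 ≤ x ∧ f x ≠ 0})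
    {a b c : ℝ} (ha : 0 ≤ a) (hac : a ≤ c) (hcb : c ≤ b) (fa : f a = 0) (fb : f b = 0) :
    f c = 0 := by
  by_contra hc
  have hpos : 0 < f c := lt_of_le_of_ne (hfnn c (ha.trans hac)) (Ne.symm hc)
  obtain ⟨x, hx, fx⟩ := intermediate_value_Icc hac
    (hfc.mono fun t ht => ha.trans ht.1) (show f c / 2 ∈ Set.Icc (f a) (f c) by
      constructor <;> linarith)
  obtain ⟨y, hy, fy⟩ := intermediate_value_Icc' hcb
    (hfc.mono fun t ht => (ha.trans hac).trans ht.1) (show f c / 2 ∈ Set.Icc (f b) (f c) by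
      constructor <;> linarith)
  have hxy : x = y := hinj ⟨ha.trans hx.1, by linarith⟩
    ⟨(ha.trans hac).trans hy.1, by linarith⟩ (fx.trans fy.symm)
  have hxc : x = c := le_antisymm hx.2 (hxy ▸ hy.1)
  rw [hxc] at fx
  linarith

/-- `f` cannot be positive on both sides of a pair of zeros: half of the smaller of the two
values would be taken on each side. -/
lemma not_pos_both_sides (f : ℝ → ℝ)
    (hfc : ContinuousOn f (Set.Ici 0))
    (hinj : Set.InjOn f {x : ℝ | 0 ≤ x ∧ f x ≠ 0})
    {s a b t : ℝ} (hs : 0 ≤ s) (hsa : s ≤ a) (hab : a < b) (hbt : b ≤ t)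
    (fa : f a = 0) (fb : f b = 0) (fs : 0 < f s) (ft : 0 < f t) : False := by
  have hm : 0 < min (f s) (f t) := lt_min fs ft
  have h1 := min_le_left (f s) (f t)
  have h2 := min_le_right (f s) (f t)
  obtain ⟨x, hx, fx⟩ := intermediate_value_Icc' hsa
    (hfc.mono fun u hu => hs.trans hu.1)
    (show min (f s) (f t) / 2 ∈ Set.Icc (f a) (f s) by constructor <;> linarith)
  have hb : 0 ≤ b := by linarith
  obtain ⟨y, hy, fy⟩ := intermediate_value_Icc hbt
    (hfc.mono fun u hu => hb.trans hu.1)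
    (show min (f s) (f t) / 2 ∈ Set.Icc (f b) (f t) by constructor <;> linarith)
  have hxy : x = y := hinj ⟨hs.trans hx.1, by linarith⟩
    ⟨hb.trans hy.1, by linarith⟩ (fx.trans fy.symm)
  linarith [hx.2, hy.1]

theorem shape_trichotomy (f : ℝ → ℝ)
    (hfc : ContinuousOn f (Set.Ici 0))
    (hfnn : ∀ x : ℝ, 0 ≤ x → 0 ≤ f x)
    (hinj : Set.InjOn f {x : ℝ | 0 ≤ x ∧ f x ≠ 0}) :
    Set.InjOn f (Set.Ici 0) ∨
    (∃ y₀ : ℝ, 0 < y₀ ∧ (∀ x ∈ Set.Icc 0 y₀, f x = 0) ∧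
      StrictMonoOn f (Set.Ioi y₀)) ∨
    (∃ x₀ : ℝ, 0 ≤ x₀ ∧ (∀ x : ℝ, x₀ ≤ x → f x = 0) ∧
      StrictAntiOn f (Set.Ico 0 x₀)) := by
  by_cases hI : Set.InjOn f (Set.Ici 0)
  · exact Or.inl hI
  right
  obtain ⟨a, b, ha, hab, fa, fb⟩ : ∃ a b, 0 ≤ a ∧ a < b ∧ f a = 0 ∧ f b = 0 := by
    simp only [Set.InjOn, not_forall] at hI
    obtain ⟨x, hx, y, hy, hxy, hne⟩ := hI
    have fx : f x = 0 := by
      by_contra h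
      exact hne (hinj ⟨hx, h⟩ ⟨hy, hxy ▸ h⟩ hxy)
    rcases lt_or_gt_of_ne hne with h | h
    · exact ⟨x, y, hx, h, fx, hxy ▸ fx⟩
    · exact ⟨y, x, hy, h, hxy ▸ fx, fx⟩
  have hb : 0 ≤ b := ha.trans hab.le
  have between : ∀ {p q c : ℝ}, 0 ≤ p → p ≤ c → c ≤ q → f p = 0 → f q = 0 → f c = 0 :=
    fun hp h1 h2 => eq_zero_between f hfc hfnn hinj hp h1 h2
  let Z : Set ℝ := Set.Ici 0 ∩ f ⁻¹' {0}
  have hZc : IsClosed Z := hfc.preimage_isClosed_of_isClosed isClosed_Ici isClosed_singleton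
  have hbZ : b ∈ Z := ⟨hb, fb⟩
  have hZne : Z.Nonempty := ⟨b, hbZ⟩
  by_cases hL : ∃ s, 0 ≤ s ∧ s ≤ a ∧ 0 < f s
  · -- `f` vanishes on `[a, ∞)`, and `x₀` is the smallest zero.
    right
    obtain ⟨s, hs, hsa, fs⟩ := hL
    have hR : ∀ t, b ≤ t → f t = 0 := fun t ht => by
      by_contra h
      exact not_pos_both_sides f hfc hinj hs hsa hab ht fa fb fs
        (lt_of_le_of_ne (hfnn t (hb.trans ht)) (Ne.symm h))
    have hbdd : BddBelow Z := ⟨0, fun z hz => hz.1⟩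
    obtain ⟨h0, f0⟩ : sInf Z ∈ Z := hZc.csInf_mem hZne hbdd
    have hle : sInf Z ≤ b := csInf_le hbdd hbZ
    refine ⟨sInf Z, h0, fun x hx => ?_, ?_⟩
    · rcases le_total x b with h | h
      · exact between h0 hx h f0 fb
      · exact hR x h
    · intro x hx y hy hxy
      have fx : f x ≠ 0 := fun h => absurd (csInf_le hbdd ⟨hx.1, h⟩) (not_le.2 hx.2)
      by_contra h
      obtain ⟨w, hw, fw⟩ := intermediate_value_Icc' (hy.2.le.trans hle)
        (hfc.mono fun u hu => hy.1.trans hu.1)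
        (show f x ∈ Set.Icc (f b) (f y) from ⟨fb ▸ hfnn x hx.1, not_lt.1 h⟩)
      have hwx : w = x := hinj ⟨hy.1.trans hw.1, fw ▸ fx⟩ ⟨hx.1, fx⟩ fw
      linarith [hw.1]
  · have f0 : f 0 = 0 := by
      by_contra h
      exact hL ⟨0, le_rfl, ha, lt_of_le_of_ne (hfnn 0 le_rfl) (Ne.symm h)⟩
    by_cases hbdd : BddAbove Z
    · left
      obtain ⟨h0, fy0⟩ : sSup Z ∈ Z := hZc.csSup_mem hZne hbdd
      refine ⟨sSup Z, lt_of_lt_of_le (ha.trans_lt hab) (le_csSup hbdd hbZ),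
        fun x hx => between le_rfl hx.1 hx.2 f0 fy0, ?_⟩
      intro x hx y hy hxy
      have hx0 : 0 ≤ x := le_trans h0 (le_of_lt hx)
      have hy0 : 0 ≤ y := hx0.trans hxy.le
      have fy : f y ≠ 0 := fun h => absurd (le_csSup hbdd ⟨hy0, h⟩) (not_le.2 hy)
      by_contra h
      obtain ⟨w, hw, fw⟩ := intermediate_value_Icc hx0
        (hfc.mono fun u hu => hu.1)
        (show f y ∈ Set.Icc (f 0) (f x) from ⟨f0.le.trans (hfnn y hy0), not_lt.1 h⟩)
      have hwy : w = y := hinj ⟨hw.1, fw ▸ fy⟩ ⟨hy0, fy⟩ fw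
      linarith [hw.2]
    · -- `f` vanishes on all of `[0, ∞)`; then `x₀ = 0` and `[0, x₀)` is empty.
      right
      refine ⟨0, le_rfl, fun x hx => ?_, by simp [StrictAntiOn]⟩
      obtain ⟨z, hz, hxz⟩ := not_bddAbove_iff.1 hbdd x
      exact between le_rfl hx hxz.le f0 hz.2
end

section
/- Let f : ℝ → ℝ be continuous on [0,∞) with f(x) ≥ 0 for all x ≥ 0, and suppose f is injective on the set {x ≥ 0 : f(x) ≠ 0}. If 0 ≤ x < y and f(x) = f(y) = 0, then either f(z) = 0 for all z ∈ [0, x] or f(z) = 0 for all z ∈ [y, ∞). -/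
/-!
If `f a ≠ 0` with `a ≤ x` and `f b ≠ 0` with `y ≤ b`, then by the intermediate value theorem the
positive value `min (f a) (f b)` is attained both on `[a, x]` and on `[y, b]`. These intervals are
disjoint, contradicting injectivity off the zero set.
-/

theorem zero_left_or_right (f : ℝ → ℝ)
    (hfc : ContinuousOn f (Set.Ici 0))
    (hfnn : ∀ x : ℝ, 0 ≤ x → 0 ≤ f x)
    (hinj : Set.InjOn f {x : ℝ | 0 ≤ x ∧ f x ≠ 0})
    (x y : ℝ) (hx : 0 ≤ x) (hxy : x < y)
    (hfx : f x = 0) (hfy : f y = 0) :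
    (∀ z ∈ Set.Icc 0 x, f z = 0) ∨ (∀ z : ℝ, y ≤ z → f z = 0) := by
  by_contra! h
  obtain ⟨⟨a, ⟨ha0, hax⟩, hfa⟩, b, hyb, hfb⟩ := h
  have hpa : 0 < f a := lt_of_le_of_ne (hfnn a ha0) hfa.symm
  have hpb : 0 < f b := lt_of_le_of_ne (hfnn b (by linarith)) hfb.symm
  have hm : 0 < min (f a) (f b) := lt_min hpa hpb
  obtain ⟨c, ⟨hac, hcx⟩, hfc'⟩ : min (f a) (f b) ∈ f '' Set.Icc a x :=
    intermediate_value_Icc' hax (hfc.mono fun t ht => ha0.trans ht.1)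
      ⟨by rw [hfx]; exact hm.le, min_le_left _ _⟩
  obtain ⟨d, ⟨hyd, hdb⟩, hfd⟩ : min (f a) (f b) ∈ f '' Set.Icc y b :=
    intermediate_value_Icc hyb (hfc.mono fun t ht => (hx.trans hxy.le).trans ht.1)
      ⟨by rw [hfy]; exact hm.le, min_le_right _ _⟩
  have hcd : c = d := hinj ⟨by linarith, by rw [hfc']; exact hm.ne'⟩
    ⟨by linarith, by rw [hfd]; exact hm.ne'⟩ (hfc'.trans hfd.symm)
  linarith
end

section
/- Let f : ℝ → ℝ and let h : ℝ → ℝ be a Hirsch function of f, and assume h is continuous on (0,∞). Then at least one of the following three statements holds: (i) h is injective on (0,∞); (ii) there exists y₀ > 0 such that h(θ) = 0 for all θ ∈ (0, y₀] and h is strictly increasing on (y₀, ∞); (iii) there exists x₀ ≥ 0 such that h(θ) = 0 for all θ ≥ x₀ and h is strictly decreasing on (0, x₀). -/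
/-!
A positive value `x = h θ` determines `θ = f x / x`, so `h` takes every positive value at most
once. With continuity, the intermediate value theorem then excludes strict peaks
(`IsHirsch.no_peak`) and strict valleys (`IsHirsch.no_valley`) of `h` at three points
`0 < a < b < c`, since a level just below a peak or just above a valley is positive and would be
attained twice.

If `h` is not injective it has two zeros `a < b`. If `h` vanishes identically, (iii) holds with
`x₀ = 0`. Otherwise take `p` with `0 < h p`; it is not between `a` and `b`, as it would be a peak.
If `b < p`, the last zero `y₀` before `p` gives (ii): a positive value left of `y₀`, or a failure
of strict monotonicity right of `y₀`, produces a peak or a valley. If `p < a`, the first zero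
after `p` gives (iii) symmetrically.
-/

def IsHirsch (f h : ℝ → ℝ) : Prop :=
  ∀ θ : ℝ, 0 < θ →
    0 ≤ h θ ∧ f (h θ) = θ * h θ ∧ ∀ x : ℝ, 0 < x → f x = θ * x → x = h θ

/-- `h` is injective on the set where it is positive. -/
theorem IsHirsch.eq_of_pos {f h : ℝ → ℝ} (hh : IsHirsch f h) {a b : ℝ} (ha : 0 < a) (hb : 0 < b)
    (hpos : 0 < h a) (hab : h a = h b) : a = b := by
  have h1 := (hh a ha).2.1
  have h2 := (hh b hb).2.1
  rw [← hab] at h2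
  exact mul_right_cancel₀ hpos.ne' (h1.symm.trans h2)

theorem IsHirsch.no_peak {f h : ℝ → ℝ} (hh : IsHirsch f h) (hhc : ContinuousOn h (Set.Ioi 0))
    {a b c : ℝ} (ha : 0 < a) (hab : a < b) (hbc : b < c) (h1 : h a < h b) (h2 : h c < h b) :
    False := by
  obtain ⟨v, hv1, hv2⟩ := exists_between (max_lt h1 h2)
  obtain ⟨hva, hvc⟩ := max_lt_iff.1 hv1
  have c1 : ContinuousOn h (Set.Icc a b) := hhc.mono fun x hx => ha.trans_le hx.1
  have c2 : ContinuousOn h (Set.Icc b c) := hhc.mono fun x hx => (ha.trans hab).trans_le hx.1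
  obtain ⟨x, hx, hxv⟩ := intermediate_value_Ioo hab.le c1 ⟨hva, hv2⟩
  obtain ⟨y, hy, hyv⟩ := intermediate_value_Ioo' hbc.le c2 ⟨hvc, hv2⟩
  have hxy := hx.2.trans hy.1
  have hx0 := ha.trans hx.1
  have hv0 : 0 < h x := hxv ▸ (hh a ha).1.trans_lt hva
  exact hxy.ne (hh.eq_of_pos hx0 (hx0.trans hxy) hv0 (hxv.trans hyv.symm))

theorem IsHirsch.no_valley {f h : ℝ → ℝ} (hh : IsHirsch f h) (hhc : ContinuousOn h (Set.Ioi 0))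
    {a b c : ℝ} (ha : 0 < a) (hab : a < b) (hbc : b < c) (h1 : h b < h a) (h2 : h b < h c) :
    False := by
  obtain ⟨v, hv2, hv1⟩ := exists_between (lt_min h1 h2)
  obtain ⟨hva, hvc⟩ := lt_min_iff.1 hv1
  have c1 : ContinuousOn h (Set.Icc a b) := hhc.mono fun x hx => ha.trans_le hx.1
  have c2 : ContinuousOn h (Set.Icc b c) := hhc.mono fun x hx => (ha.trans hab).trans_le hx.1
  obtain ⟨x, hx, hxv⟩ := intermediate_value_Ioo' hab.le c1 ⟨hv2, hva⟩
  obtain ⟨y, hy, hyv⟩ := intermediate_value_Ioo hbc.le c2 ⟨hv2, hvc⟩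
  have hxy := hx.2.trans hy.1
  have hx0 := ha.trans hx.1
  have hv0 : 0 < h x := hxv ▸ (hh b (ha.trans hab)).1.trans_lt hv2
  exact hxy.ne (hh.eq_of_pos hx0 (hx0.trans hxy) hv0 (hxv.trans hyv.symm))

theorem isCompact_zeros_Icc {h : ℝ → ℝ} (hhc : ContinuousOn h (Set.Ioi 0)) {a b : ℝ}
    (ha : 0 < a) : IsCompact (Set.Icc a b ∩ h ⁻¹' {0}) := by
  have c1 : ContinuousOn h (Set.Icc a b) := hhc.mono fun x hx => ha.trans_le hx.1
  exact isCompact_Icc.of_isClosed_subset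
    (c1.preimage_isClosed_of_isClosed isClosed_Icc isClosed_singleton) Set.inter_subset_left

theorem hirsch_shape_trichotomy (f h : ℝ → ℝ) (hh : IsHirsch f h)
    (hhc : ContinuousOn h (Set.Ioi 0)) :
    Set.InjOn h (Set.Ioi 0) ∨
    (∃ y₀ : ℝ, 0 < y₀ ∧ (∀ θ ∈ Set.Ioc 0 y₀, h θ = 0) ∧
      StrictMonoOn h (Set.Ioi y₀)) ∨
    (∃ x₀ : ℝ, 0 ≤ x₀ ∧ (∀ θ : ℝ, 0 < θ → x₀ ≤ θ → h θ = 0) ∧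
      StrictAntiOn h (Set.Ioo 0 x₀)) := by
  by_cases hinj : Set.InjOn h (Set.Ioi 0)
  · exact Or.inl hinj
  refine Or.inr ?_
  have hpos : ∀ θ, 0 < θ → h θ ≠ 0 → 0 < h θ := fun θ h0 hne =>
    lt_of_le_of_ne (hh θ h0).1 hne.symm
  obtain ⟨a, b, ha, hab, hza, hzb⟩ : ∃ a b : ℝ, 0 < a ∧ a < b ∧ h a = 0 ∧ h b = 0 := by
    simp only [Set.InjOn, not_forall] at hinj
    obtain ⟨a, ha, b, hb, heq, hne⟩ := hinj
    have hza : h a = 0 := by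
      by_contra hza
      exact hne (hh.eq_of_pos ha hb (hpos a ha hza) heq)
    rcases lt_or_gt_of_ne hne with hlt | hlt
    · exact ⟨a, b, ha, hlt, hza, heq ▸ hza⟩
    · exact ⟨b, a, hb, hlt, heq ▸ hza, hza⟩
  have hb := ha.trans hab
  by_cases hall : ∀ θ, 0 < θ → h θ = 0
  · exact Or.inr ⟨0, le_rfl, fun θ h0 _ => hall θ h0, by simp [StrictAntiOn]⟩
  push Not at hall
  obtain ⟨p, hp0, hp⟩ := hall
  replace hp := hpos p hp0 hp
  rcases lt_trichotomy p a with hpa | rfl | hpa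
  · -- the first zero after `p`
    obtain ⟨x₀, ⟨⟨hpx, hxa⟩, hzx⟩, hleast⟩ :=
      (isCompact_zeros_Icc hhc (b := a) hp0).exists_isLeast ⟨a, ⟨hpa.le, le_rfl⟩, hza⟩
    have hzx : h x₀ = 0 := hzx
    have hx0 : 0 < x₀ := hp0.trans_le hpx
    have hleft : ∀ θ, 0 < θ → θ < x₀ → 0 < h θ := by
      intro θ h0 hlt
      refine hpos θ h0 fun hz => ?_
      rcases le_or_gt p θ with hle | hgt
      · exact hlt.not_ge (hleast ⟨⟨hle, hlt.le.trans hxa⟩, hz⟩)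
      · exact hh.no_peak hhc h0 hgt hpa (hz ▸ hp) (hza ▸ hp)
    refine Or.inr ⟨x₀, hx0.le, ?_, ?_⟩
    · intro θ h0 hle
      by_contra hz
      have hθ := hpos θ h0 hz
      rcases lt_trichotomy θ b with hlt | rfl | hlt
      · have hne : x₀ ≠ θ := by rintro rfl; exact hz hzx
        exact hh.no_peak hhc hx0 (lt_of_le_of_ne hle hne) hlt (hzx ▸ hθ) (hzb ▸ hθ)
      · exact hz hzb
      · exact hh.no_valley hhc hp0 (hpa.trans hab) hlt (hzb ▸ hp) (hzb ▸ hθ)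
    · intro x hx y hy hxy
      rcases lt_trichotomy (h x) (h y) with hlt | heq | hlt
      · exact (hh.no_peak hhc hx.1 hxy hy.2 hlt (hzx ▸ hleft y hy.1 hy.2)).elim
      · exact absurd (hh.eq_of_pos hx.1 hy.1 (hleft x hx.1 hx.2) heq) hxy.ne
      · exact hlt
  · exact absurd hza hp.ne'
  rcases lt_trichotomy p b with hpb | rfl | hpb
  · exact (hh.no_peak hhc ha hpa hpb (hza ▸ hp) (hzb ▸ hp)).elim
  · exact (hp.ne hzb.symm).elim
  -- the last zero before `p`
  obtain ⟨y₀, ⟨⟨hby, hyp⟩, hzy⟩, hgreatest⟩ :=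
    (isCompact_zeros_Icc hhc (b := p) hb).exists_isGreatest ⟨b, ⟨le_rfl, hpb.le⟩, hzb⟩
  have hzy : h y₀ = 0 := hzy
  have hy0 : 0 < y₀ := hb.trans_le hby
  have hright : ∀ θ, y₀ < θ → 0 < h θ := by
    intro θ hlt
    refine hpos θ (hy0.trans hlt) fun hz => ?_
    rcases le_or_gt θ p with hle | hgt
    · exact hlt.not_ge (hgreatest ⟨⟨hby.trans hlt.le, hle⟩, hz⟩)
    · exact hh.no_peak hhc hb hpb hgt (hzb ▸ hp) (hz ▸ hp)
  refine Or.inl ⟨y₀, hy0, ?_, ?_⟩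
  · rintro θ ⟨h0, hle⟩
    by_contra hz
    have hθ := hpos θ h0 hz
    rcases lt_trichotomy θ a with hlt | rfl | hlt
    · exact hh.no_valley hhc h0 hlt hpa (hza ▸ hθ) (hza ▸ hp)
    · exact hz hza
    · have hne : θ ≠ y₀ := by rintro rfl; exact hz hzy
      exact hh.no_peak hhc ha hlt (lt_of_le_of_ne hle hne) (hza ▸ hθ) (hzy ▸ hθ)
  · intro x hx y hy hxy
    have hx : y₀ < x := hx
    rcases lt_trichotomy (h x) (h y) with hlt | heq | hlt
    · exact hlt
    · exact absurd (hh.eq_of_pos (hy0.trans hx) (hy0.trans hy) (hright x hx) heq) hxy.ne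
    · exact (hh.no_peak hhc hy0 hx hxy (hzy ▸ hright x hx) hlt).elim
end
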